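/- There exist a constant C > 0 and a natural number N such that for all n ≥ N, the Compact increment satisfies d_c(n) ≤ C · √(c(n) / log c(n)), where log denotes the natural logarithm; that is, (c(n+1) − c(n) : ℝ) ≤ C · Real.sqrt (c(n) / Real.log (c(n))). -/

import Mathlib

/-- `p i` is the `i`-th prime number (1-indexed): `p 1 = 2`, `p 2 = 3`, ... -/
noncomputable def p (i : ℕ) : ℕ := Nat.nth Nat.Prime (i - 1)

/-- `aC x i` is the unique residue `r` with `0 ≤ r < p i` and `x + r ≡ 0 (mod p i)`. -/
noncomputable def aC (x i : ℕ) : ℕ := (p i - x % p i) % p i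

/-- The Compact increment `d_c(n)`, expressed in terms of `c n = x`:
`d_c(1) = 1` and, for `n ≥ 2`, `d_c(n)` is the smallest positive even integer `d`
with `d ≠ a_c(n, i)` for every `i ≥ 1` with `p i ^ 2 ≤ c n`. -/
noncomputable def dCaux (n x : ℕ) : ℕ :=
  if n = 1 then 1
  else sInf {d : ℕ | 0 < d ∧ 2 ∣ d ∧ ∀ i, 1 ≤ i → p i ^ 2 ≤ x → d ≠ aC x i}

/-- The Compact numbers: `c 1 = 2` and `c (n+1) = c n + d_c n`. -/
noncomputable def c : ℕ → ℕ
  | 0 => 0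
  | 1 => 2
  | (n + 2) => c (n + 1) + dCaux (n + 1) (c (n + 1))

/-- The Compact increment `d_c(n)`. -/
noncomputable def dC (n : ℕ) : ℕ := dCaux n (c n)

/-!
At most one residue is forbidden for each prime `q ≤ √x`, so the increment taken at `x` can be found
among the first `π(√x) + 1` positive even integers. Chebyshev's bound `π(y) = O(y / log y)` turns
this into `d_c(n) = O(√(c n) / log (c n))`, which is sharper than `O(√(c n / log (c n)))`.
-/

open Asymptotics Filter Real
open scoped Finset Nat.Prime

theorem exists_pos_dvd_le_notMem (s : Finset ℕ) {m : ℕ} (hm : 0 < m) :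
    ∃ d, 0 < d ∧ m ∣ d ∧ d ≤ m * (#s + 1) ∧ d ∉ s := by
  have h_inj : Function.Injective fun k ↦ m * (k + 1) := fun a b h ↦ by
    simpa [hm.ne'] using h
  have h_card : #s < #((Finset.range (#s + 1)).image fun k ↦ m * (k + 1)) := by
    rw [Finset.card_image_of_injective _ h_inj, Finset.card_range]
    exact Nat.lt_succ_self _
  obtain ⟨d, hd, hds⟩ := Finset.exists_mem_notMem_of_card_lt_card h_card
  obtain ⟨k, hk, rfl⟩ := Finset.mem_image.1 hd
  exact ⟨m * (k + 1), by positivity, dvd_mul_right _ _,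
    Nat.mul_le_mul_left m (Finset.mem_range.1 hk), hds⟩

/-- The positive even integers `d` allowed by the sieve at `x`; for `n ≥ 2` the Compact increment
`d_c(n)` is the least element of this set at `x = c n`. -/
def admissibleIncrements (x : ℕ) : Set ℕ :=
  {d | 0 < d ∧ 2 ∣ d ∧ ∀ i, 1 ≤ i → p i ^ 2 ≤ x → d ≠ aC x i}

/-- The residues forbidden by the sieve at `x`, indexed by the primes `q ≤ √x` themselves rather
than by their position `i` in the sequence of primes. -/
def forbiddenResidues (x : ℕ) : Finset ℕ :=
  (Nat.primesLE x.sqrt).image fun q ↦ (q - x % q) % q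

theorem card_forbiddenResidues_le (x : ℕ) : #(forbiddenResidues x) ≤ π x.sqrt :=
  Finset.card_image_le.trans_eq (Nat.primesLE_card_eq_primeCounting _)

theorem aC_mem_forbiddenResidues {x i : ℕ} (h : p i ^ 2 ≤ x) : aC x i ∈ forbiddenResidues x :=
  Finset.mem_image.2
    ⟨p i, Nat.mem_primesLE.2 ⟨Nat.le_sqrt'.2 h, Nat.prime_nth_prime _⟩, rfl⟩

theorem exists_mem_admissibleIncrements_le (x : ℕ) :
    ∃ d ∈ admissibleIncrements x, d ≤ 2 * (π x.sqrt + 1) := by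
  obtain ⟨d, d_pos, d_even, d_le, hd⟩ := exists_pos_dvd_le_notMem (forbiddenResidues x) two_pos
  refine ⟨d, ⟨d_pos, d_even, ?_⟩, d_le.trans (by gcongr; exact card_forbiddenResidues_le x)⟩
  rintro i - hi rfl
  exact hd (aC_mem_forbiddenResidues hi)

theorem dCaux_of_ne_one {n : ℕ} (hn : n ≠ 1) (x : ℕ) :
    dCaux n x = sInf (admissibleIncrements x) :=
  if_neg hn

theorem dCaux_pos (n x : ℕ) : 0 < dCaux n x := by
  obtain rfl | hn := eq_or_ne n 1
  · exact one_pos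
  · obtain ⟨d, hd, -⟩ := exists_mem_admissibleIncrements_le x
    rw [dCaux_of_ne_one hn]
    exact (Nat.sInf_mem ⟨d, hd⟩).1

theorem dCaux_le (n x : ℕ) : dCaux n x ≤ 2 * (π x.sqrt + 1) := by
  obtain rfl | hn := eq_or_ne n 1
  · rw [dCaux, if_pos rfl]
    omega
  · obtain ⟨d, hd, d_le⟩ := exists_mem_admissibleIncrements_le x
    rw [dCaux_of_ne_one hn]
    exact (Nat.sInf_le hd).trans d_le

theorem c_add_one {n : ℕ} (hn : 1 ≤ n) : c (n + 1) = c n + dC n := by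
  obtain ⟨m, rfl⟩ := Nat.exists_eq_add_of_le' hn
  rfl

theorem c_strictMono : StrictMono c := by
  refine strictMono_nat_of_lt_succ fun n ↦ ?_
  obtain rfl | hn := n.eq_zero_or_pos
  · exact two_pos
  · rw [c_add_one hn]
    exact Nat.lt_add_of_pos_right (dCaux_pos n (c n))

theorem tendsto_natCast_c_atTop : Tendsto (fun n ↦ (c n : ℝ)) atTop atTop :=
  tendsto_natCast_atTop_atTop.comp c_strictMono.tendsto_atTop

theorem primeCounting_floor_isBigO :
    (fun x : ℝ ↦ (π ⌊x⌋₊ : ℝ)) =O[atTop] fun x ↦ x / log x := by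
  refine .of_bound (log 4 + 1) ?_
  filter_upwards [Chebyshev.eventually_primeCounting_le one_pos, eventually_ge_atTop 1]
    with x hπ hx
  have : 0 ≤ x / log x := div_nonneg (by linarith) (log_nonneg hx)
  rwa [norm_of_nonneg (Nat.cast_nonneg _), norm_of_nonneg this, ← mul_div_assoc]

theorem one_isBigO_div_log : (fun _ : ℝ ↦ (1 : ℝ)) =O[atTop] fun x ↦ x / log x := by
  refine .of_bound' ?_
  filter_upwards [eventually_gt_atTop 1] with x hx
  have h_log : 0 < log x := log_pos hx
  have : 1 ≤ x / log x := (one_le_div h_log).2 (log_le_self (by linarith))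
  rwa [norm_one, norm_of_nonneg (by linarith)]

theorem primeCounting_floor_sqrt_add_one_isBigO :
    (fun x : ℝ ↦ (π ⌊√x⌋₊ : ℝ) + 1) =O[atTop] fun x ↦ √x / log x := by
  have h_sqrt : (fun x : ℝ ↦ (π ⌊√x⌋₊ : ℝ) + 1) =O[atTop] fun x ↦ √x / log √x :=
    (primeCounting_floor_isBigO.add one_isBigO_div_log).comp_tendsto tendsto_sqrt_atTop
  have h_log : (fun x ↦ √x / log √x) =ᶠ[atTop] fun x ↦ 2 * (√x / log x) := by
    filter_upwards [eventually_ge_atTop 0] with x hx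
    rw [log_sqrt hx, div_div_eq_mul_div]
    ring
  exact (h_sqrt.trans_eventuallyEq h_log).trans (isBigO_const_mul_self 2 _ _)

theorem sqrt_div_log_isBigO_sqrt_div_log :
    (fun x ↦ √x / log x) =O[atTop] fun x ↦ √(x / log x) := by
  refine .of_bound' ?_
  filter_upwards [eventually_ge_atTop 0, tendsto_log_atTop.eventually_ge_atTop 1] with x hx h_log
  have h_sqrt_log : √(log x) ≤ log x :=
    (sqrt_le_left (by positivity)).2 (le_self_pow₀ h_log two_ne_zero)
  rw [norm_of_nonneg (by positivity), norm_of_nonneg (by positivity), sqrt_div hx]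
  gcongr

theorem dC_isBigO : (fun n ↦ (dC n : ℝ)) =O[atTop] fun n ↦ √(c n) / log (c n) := by
  have h_greedy : (fun n ↦ (dC n : ℝ)) =O[atTop] fun n ↦ (π ⌊√(c n : ℝ)⌋₊ : ℝ) + 1 := by
    refine .of_bound 2 (.of_forall fun n ↦ ?_)
    rw [norm_of_nonneg (by positivity), norm_of_nonneg (by positivity),
      nat_floor_real_sqrt_eq_nat_sqrt]
    exact_mod_cast dCaux_le n (c n)
  exact h_greedy.trans
    (primeCounting_floor_sqrt_add_one_isBigO.comp_tendsto tendsto_natCast_c_atTop)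

/-- There exist a constant `C > 0` and a natural number `N` such that for all
`n ≥ N`, the Compact increment satisfies
`d_c(n) = c (n+1) - c n ≤ C * √(c n / log (c n))`. -/
theorem stmt_10 :
    ∃ C : ℝ, 0 < C ∧ ∃ N : ℕ, ∀ n : ℕ, N ≤ n →
      ((c (n + 1) - c n : ℕ) : ℝ) ≤ C * Real.sqrt ((c n : ℝ) / Real.log (c n)) := by
  have h_dC : (fun n ↦ (dC n : ℝ)) =O[atTop] fun n ↦ √(c n / log (c n)) :=
    dC_isBigO.trans (sqrt_div_log_isBigO_sqrt_div_log.comp_tendsto tendsto_natCast_c_atTop)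
  obtain ⟨C, C_pos, hC⟩ := h_dC.exists_pos
  obtain ⟨N, hN⟩ := eventually_atTop.1 (hC.bound.and (eventually_ge_atTop 1))
  refine ⟨C, C_pos, N, fun n hn ↦ ?_⟩
  obtain ⟨h_bound, n_pos⟩ := hN n hn
  rwa [norm_of_nonneg (Nat.cast_nonneg _), norm_of_nonneg (sqrt_nonneg _),
    ← Nat.add_sub_cancel_left (n := c n) (m := dC n), ← c_add_one n_pos] at h_bound
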